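/- Let f : [0,∞) → ℝ be a continuous function that is operator convex and satisfies f(x) ≤ 0 for all x ≥ 0. Then f is operator superquadratic, in the sense that for all positive bounded linear operators A, B on a complex Hilbert space, f((A+B)/2) + f(|A−B|/2) ≤ (f(A) + f(B))/2. -/

import Mathlib

/-- The absolute value `|T| = (T*T)^{1/2}` of a bounded operator, via the continuous
functional calculus. -/
noncomputable def opAbs {H : Type*} [NormedAddCommGroup H] [InnerProductSpace ℂ H]
    [CompleteSpace H] (T : H →L[ℂ] H) : H →L[ℂ] H :=
  CFC.sqrt (star T * T)

/-- A continuous function `f : [0,M] → ℝ` is operator superquadratic if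
`f(αA + (1−α)B) ≤ α[f(A) − f((1−α)|A−B|)] + (1−α)[f(B) − f(α|A−B|)]`
for all `α ∈ [0,1]` and all positive bounded linear operators `A, B` on a complex
Hilbert space with spectra contained in `[0,M]`. -/
def OperatorSuperquadraticOn (M : ℝ) (f : ℝ → ℝ) : Prop :=
  ∀ (H : Type) [NormedAddCommGroup H] [InnerProductSpace ℂ H] [CompleteSpace H],
    ∀ A B : H →L[ℂ] H, 0 ≤ A → 0 ≤ B →
      spectrum ℝ A ⊆ Set.Icc 0 M → spectrum ℝ B ⊆ Set.Icc 0 M →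
      ∀ α : ℝ, α ∈ Set.Icc (0 : ℝ) 1 →
        cfc f (α • A + (1 - α) • B) ≤
          α • (cfc f A - cfc f ((1 - α) • opAbs (A - B))) +
          (1 - α) • (cfc f B - cfc f (α • opAbs (A - B)))

/-- Operator superquadraticity on `[0, ∞)` tested on one C⋆-algebra `𝒜`: the analogue of
`OperatorSuperquadraticOn` for the whole half-line, with `CFC.abs` in the role of `opAbs`.
Continuity is part of the notion, so `cfc f` does not take its junk value `0` at positive
elements. -/
structure OperatorSuperquadraticIn (𝒜 : Type*) [CStarAlgebra 𝒜] [PartialOrder 𝒜]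
    [StarOrderedRing 𝒜] (f : ℝ → ℝ) : Prop where
  continuousOn : ContinuousOn f (Set.Ici 0)
  cfc_le : ∀ a b : 𝒜, 0 ≤ a → 0 ≤ b → ∀ α ∈ Set.Icc (0 : ℝ) 1,
    cfc f (α • a + (1 - α) • b) ≤
      α • (cfc f a - cfc f ((1 - α) • CFC.abs (a - b))) +
      (1 - α) • (cfc f b - cfc f (α • CFC.abs (a - b)))

lemma opAbs_eq_cfcAbs {H : Type*} [NormedAddCommGroup H] [InnerProductSpace ℂ H]
    [CompleteSpace H] (T : H →L[ℂ] H) : opAbs T = CFC.abs T :=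
  rfl

lemma convexOn_of_forall_mem_Icc {𝕜 E F : Type*} [Ring 𝕜] [PartialOrder 𝕜]
    [IsOrderedAddMonoid 𝕜] [AddCommMonoid E] [AddCommMonoid F] [PartialOrder F] [SMul 𝕜 E]
    [SMul 𝕜 F] {s : Set E} {g : E → F} (hs : Convex 𝕜 s)
    (hg : ∀ x ∈ s, ∀ y ∈ s, ∀ α ∈ Set.Icc (0 : 𝕜) 1,
      g (α • x + (1 - α) • y) ≤ α • g x + (1 - α) • g y) :
    ConvexOn 𝕜 s g := by
  refine ⟨hs, fun x hx y hy α β hα hβ hαβ ↦ ?_⟩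
  obtain rfl : β = 1 - α := eq_sub_of_add_eq' hαβ
  exact hg x hx y hy α ⟨hα, sub_nonneg.1 hβ⟩

lemma cfc_nonpos_of_nonneg {R A : Type*} {p : A → Prop} [CommSemiring R] [PartialOrder R]
    [StarRing R] [MetricSpace R] [IsTopologicalSemiring R] [ContinuousStar R]
    [ContinuousSqrt R] [StarOrderedRing R] [TopologicalSpace A] [Ring A] [StarRing A]
    [PartialOrder A] [StarOrderedRing A] [Algebra R A] [ContinuousFunctionalCalculus R A p]
    [NonnegSpectrumClass R A] {f : R → R} (hf : ∀ x, 0 ≤ x → f x ≤ 0) {a : A} (ha : 0 ≤ a) :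
    cfc f a ≤ 0 :=
  cfc_nonpos f a fun x hx ↦ hf x (spectrum_nonneg_of_nonneg ha hx)

section CStarAlgebra

variable {𝒜 : Type*} [CStarAlgebra 𝒜] [PartialOrder 𝒜] [StarOrderedRing 𝒜] {f : ℝ → ℝ}

lemma OperatorSuperquadraticIn.cfc_midpoint_add_le (hf : OperatorSuperquadraticIn 𝒜 f)
    {a b : 𝒜} (ha : 0 ≤ a) (hb : 0 ≤ b) :
    cfc f ((2 : ℝ)⁻¹ • (a + b)) + cfc f ((2 : ℝ)⁻¹ • CFC.abs (a - b)) ≤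
      (2 : ℝ)⁻¹ • (cfc f a + cfc f b) := by
  have half : 1 - (2 : ℝ)⁻¹ = 2⁻¹ := by norm_num
  have h := hf.cfc_le a b ha hb 2⁻¹ ⟨by norm_num, by norm_num⟩
  rw [half, ← smul_add] at h
  rw [← le_sub_iff_add_le]
  refine h.trans_eq ?_
  module

theorem operatorConvex_nonpos_operatorSuperquadratic_general
    (hcont : ContinuousOn f (Set.Ici 0))
    (hconv : ConvexOn ℝ (Set.Ici (0 : 𝒜)) (cfc f))
    (hneg : ∀ x, 0 ≤ x → f x ≤ 0) : OperatorSuperquadraticIn 𝒜 f where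
  continuousOn := hcont
  cfc_le a b ha hb α hα := by
    have hβ : 0 ≤ 1 - α := sub_nonneg.2 hα.2
    have cfc_abs_nonpos {t : ℝ} (ht : 0 ≤ t) : cfc f (t • CFC.abs (a - b)) ≤ 0 :=
      cfc_nonpos_of_nonneg hneg (smul_nonneg ht (CFC.abs_nonneg _))
    calc
      cfc f (α • a + (1 - α) • b) ≤ α • cfc f a + (1 - α) • cfc f b :=
        hconv.2 ha hb hα.1 hβ (add_sub_cancel α 1)
      _ ≤ α • (cfc f a - cfc f ((1 - α) • CFC.abs (a - b))) +
          (1 - α) • (cfc f b - cfc f (α • CFC.abs (a - b))) :=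
        add_le_add
          (smul_le_smul_of_nonneg_left (le_sub_self_iff _ |>.2 (cfc_abs_nonpos hβ)) hα.1)
          (smul_le_smul_of_nonneg_left (le_sub_self_iff _ |>.2 (cfc_abs_nonpos hα.1)) hβ)

end CStarAlgebra

/-- If `f : [0,∞) → ℝ` is continuous, operator convex and
nonpositive, then `f` is operator superquadratic in the midpoint sense:
`f((A+B)/2) + f(|A−B|/2) ≤ (f(A) + f(B))/2` for all positive operators `A, B`. -/
theorem operatorConvex_nonpos_operatorSuperquadratic (f : ℝ → ℝ)
    (hcont : ContinuousOn f (Set.Ici 0))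
    (hconv : ∀ (H : Type) [NormedAddCommGroup H] [InnerProductSpace ℂ H]
      [CompleteSpace H], ∀ A B : H →L[ℂ] H, 0 ≤ A → 0 ≤ B →
        ∀ α : ℝ, α ∈ Set.Icc (0 : ℝ) 1 →
          cfc f (α • A + (1 - α) • B) ≤ α • cfc f A + (1 - α) • cfc f B)
    (hneg : ∀ x : ℝ, 0 ≤ x → f x ≤ 0) :
    ∀ (H : Type) [NormedAddCommGroup H] [InnerProductSpace ℂ H] [CompleteSpace H],
      ∀ A B : H →L[ℂ] H, 0 ≤ A → 0 ≤ B →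
        cfc f ((2 : ℝ)⁻¹ • (A + B)) + cfc f ((2 : ℝ)⁻¹ • opAbs (A - B)) ≤
          (2 : ℝ)⁻¹ • (cfc f A + cfc f B) := by
  intro H _ _ _ A B hA hB
  have convexOn_cfc : ConvexOn ℝ (Set.Ici (0 : H →L[ℂ] H)) (cfc f) :=
    convexOn_of_forall_mem_Icc (convex_Ici 0) fun X hX Y hY ↦ hconv H X Y hX hY
  rw [opAbs_eq_cfcAbs]
  exact (operatorConvex_nonpos_operatorSuperquadratic_general hcont convexOn_cfc
    hneg).cfc_midpoint_add_le hA hB
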